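/- arXiv:math/0508532 — 2 statements merged into one kernel-verified Lean document; each statement's English description precedes it below -/
import Mathlib

section
/- Let X be a set with infinitely many points, let R be an anti-symmetric cross ratio on X, and let φ be the induced function on triples. Then for every quadruple (a,b,c,d) of pairwise distinct points of X one has φ(a,b,c) − φ(b,c,d) = R(c,b,a,d). -/
/-- Pairwise distinctness of three points. -/
def PD3 {X : Type*} (a b c : X) : Prop := a ≠ b ∧ a ≠ c ∧ b ≠ c

/-- Pairwise distinctness of four points. -/
def PD4 {X : Type*} (a b c d : X) : Prop :=
  a ≠ b ∧ a ≠ c ∧ a ≠ d ∧ b ≠ c ∧ b ≠ d ∧ c ≠ d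

/-- Pairwise distinctness of five points. -/
def PD5 {X : Type*} (a b c d e : X) : Prop :=
  a ≠ b ∧ a ≠ c ∧ a ≠ d ∧ a ≠ e ∧ b ≠ c ∧ b ≠ d ∧ b ≠ e ∧ c ≠ d ∧ c ≠ e ∧ d ≠ e

/-!
The two antisymmetries generate a dihedral group of order eight acting on quadruples of distinct
points, and `R` changes by a sign character of this group. In `2 φ(a,b,c)` and `2 φ(b,c,d)`,
computed with the missing point of `{a,b,c,d}` as auxiliary point, the three summands correspond in
pairs under the group: two pairs have equal signs and cancel in the difference, while the third pair
is `R(c,b,a,d)` and `R(c,b,d,a) = -R(c,b,a,d)`.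
-/

section PD4

variable {X : Type*} {a b c d : X}

theorem PD4.swap_left (h : PD4 a b c d) : PD4 b a c d := by
  grind [PD4]

theorem PD4.swap_middle (h : PD4 a b c d) : PD4 a c b d := by
  grind [PD4]

theorem PD4.swap_right (h : PD4 a b c d) : PD4 a b d c := by
  grind [PD4]

theorem PD4.swap_pairs (h : PD4 a b c d) : PD4 c d a b :=
  h.swap_middle.swap_left.swap_right.swap_middle

theorem PD4.reverse (h : PD4 a b c d) : PD4 d c b a :=
  h.swap_pairs.swap_left.swap_right

end PD4

/-- The antisymmetry axioms (i) and (ii) of an anti-symmetric cross ratio, required only on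
quadruples of pairwise distinct points and with values in any type with a negation. -/
structure IsPairAntisymm {X A : Type*} [Neg A] (R : X → X → X → X → A) : Prop where
  swap_left {a b c d : X} : PD4 a b c d → R a b c d = -R b a c d
  swap_pairs {a b c d : X} : PD4 a b c d → R c d a b = -R a b c d

namespace IsPairAntisymm

variable {X A : Type*} [InvolutiveNeg A] {R : X → X → X → X → A} {a b c d : X}

theorem rotate (hR : IsPairAntisymm R) (h : PD4 a b c d) : R c d b a = R a b c d := by
  rw [hR.swap_pairs h.swap_left, hR.swap_left h]

theorem swap_right (hR : IsPairAntisymm R) (h : PD4 a b c d) : R a b d c = -R a b c d :=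
  calc
    R a b d c = R d c b a := (hR.rotate h.swap_right).symm
    _ = -R c d b a := hR.swap_left h.reverse
    _ = -R a b c d := by rw [hR.rotate h]

end IsPairAntisymm

/-- The sum `R(ξ,ζ,η,ν) + R(ζ,η,ξ,ν) + R(η,ξ,ζ,ν)` whose half is the induced function
`φ(ξ,η,ζ)`. The auxiliary point `ν` is kept as an argument, and the factor `1 / 2` is left out so
that `R` may take values in an additive group. -/
def tripleSum {X A : Type*} [Add A] (R : X → X → X → X → A) (ξ η ζ ν : X) : A :=
  R ξ ζ η ν + R ζ η ξ ν + R η ξ ζ ν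

section AddCommGroup

variable {X A : Type*} [AddCommGroup A] {R : X → X → X → X → A}

theorem IsPairAntisymm.tripleSum_sub_tripleSum (hR : IsPairAntisymm R) {a b c d : X}
    (h : PD4 a b c d) : tripleSum R a b c d - tripleSum R b c d a = 2 • R c b a d := by
  have h_first : R b d c a = R a c b d := hR.rotate h.swap_middle
  have h_second : R d c b a = R b a c d := (hR.rotate h.reverse).symm
  have h_third : R c b d a = -R c b a d := hR.swap_right h.swap_left.swap_middle.swap_left
  rw [tripleSum, tripleSum, h_first, h_second, h_third]
  abel

theorem stmt3_general (h_two : IsSMulRegular A 2) (hR : IsPairAntisymm R) {φ : X → X → X → A}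
    (hφ : ∀ ξ η ζ ν, PD3 ξ η ζ → ν ≠ ξ → ν ≠ η → ν ≠ ζ → 2 • φ ξ η ζ = tripleSum R ξ η ζ ν)
    (a b c d : X) (h : PD4 a b c d) : φ a b c - φ b c d = R c b a d := by
  have ⟨hab, hac, had, hbc, hbd, hcd⟩ := h
  have h_abc : 2 • φ a b c = tripleSum R a b c d :=
    hφ a b c d ⟨hab, hac, hbc⟩ had.symm hbd.symm hcd.symm
  have h_bcd : 2 • φ b c d = tripleSum R b c d a := hφ b c d a ⟨hbc, hbd, hcd⟩ hab hac had
  apply h_two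
  calc
    2 • (φ a b c - φ b c d) = tripleSum R a b c d - tripleSum R b c d a := by
      rw [smul_sub, h_abc, h_bcd]
    _ = 2 • R c b a d := hR.tripleSum_sub_tripleSum h

end AddCommGroup

/-- for the function `φ` on triples induced by an anti-symmetric cross
ratio `R` on an infinite set `X`, one has `φ a b c - φ b c d = R c b a d` for every
quadruple `(a,b,c,d)` of pairwise distinct points. -/
theorem stmt3 {X : Type*} [Infinite X] (R : X → X → X → X → ℝ) (φ : X → X → X → ℝ)
    (hbdd : ∃ M, ∀ a b c d, PD4 a b c d → |R a b c d| ≤ M)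
    (hanti1 : ∀ a b c d, PD4 a b c d → R a b c d = - R b a c d)
    (hanti2 : ∀ a b c d, PD4 a b c d → R c d a b = - R a b c d)
    (hcoc : ∀ a b b' c d, PD5 a b b' c d → R a b c d + R b b' c d = R a b' c d)
    (hext1 : ∀ a b c, PD3 a b c → R a a b c = 0)
    (hext2 : ∀ a b c, PD3 a b c → R b c a a = 0)
    (hφ : ∀ ξ η ζ ν, PD3 ξ η ζ → ν ≠ ξ → ν ≠ η → ν ≠ ζ →
      φ ξ η ζ = (1 / 2 : ℝ) * (R ξ ζ η ν + R ζ η ξ ν + R η ξ ζ ν))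
    (hφdeg : ∀ ξ η ζ, ¬ PD3 ξ η ζ → φ ξ η ζ = 0) :
    ∀ a b c d : X, PD4 a b c d → φ a b c - φ b c d = R c b a d :=
  stmt3_general (nsmul_right_injective two_ne_zero) ⟨hanti1 _ _ _ _, hanti2 _ _ _ _⟩
    fun ξ η ζ ν h hξ hη hζ ↦ by rw [hφ ξ η ζ ν h hξ hη hζ, tripleSum]; ring
end

section
/- There is exactly one anti-symmetric cross ratio R₀ on the circle ℝ/ℤ such that R₀(a,b,c,d) = 0 whenever the quadruple (a,b,c,d) of pairwise distinct points is ordered, and R₀(a,b,c,d) = 1 whenever the quadruple (a,c,b,d) is ordered. -/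
/-- The circle `ℝ/ℤ`. -/
abbrev Circle1 := AddCircle (1 : ℝ)

/-- A triple of points of `ℝ/ℤ` is ordered if it lifts to reals
`t₁ < t₂ < t₃ < t₁ + 1`. -/
def Ordered3 (a b c : Circle1) : Prop :=
  ∃ t₁ t₂ t₃ : ℝ, t₁ < t₂ ∧ t₂ < t₃ ∧ t₃ < t₁ + 1 ∧
    a = (t₁ : Circle1) ∧ b = (t₂ : Circle1) ∧ c = (t₃ : Circle1)

/-- A quadruple of points of `ℝ/ℤ` is ordered if it lifts to reals
`t₁ < t₂ < t₃ < t₄ < t₁ + 1`. -/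
def Ordered4 (a b c d : Circle1) : Prop :=
  ∃ t₁ t₂ t₃ t₄ : ℝ, t₁ < t₂ ∧ t₂ < t₃ ∧ t₃ < t₄ ∧ t₄ < t₁ + 1 ∧
    a = (t₁ : Circle1) ∧ b = (t₂ : Circle1) ∧ c = (t₃ : Circle1) ∧ d = (t₄ : Circle1)

/-- `R` is an anti-symmetric cross ratio: bounded on pairwise distinct quadruples,
anti-symmetric in the first pair and under exchanging the two pairs, additive (cocycle)
in the first pair, and extended by `0` to the degenerate quadruples. -/
def IsCrossRatio {X : Type*} (R : X → X → X → X → ℝ) : Prop :=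
  (∃ M, ∀ a b c d, PD4 a b c d → |R a b c d| ≤ M) ∧
  (∀ a b c d, PD4 a b c d → R a b c d = - R b a c d) ∧
  (∀ a b c d, PD4 a b c d → R c d a b = - R a b c d) ∧
  (∀ a b b' c d, PD5 a b b' c d → R a b c d + R b b' c d = R a b' c d) ∧
  (∀ a b c, PD3 a b c → R a a b c = 0) ∧
  (∀ a b c, PD3 a b c → R b c a a = 0)

/-!
In a circular order, let `o a b c` be `1`, `-1` or `0` according to whether the triple `(a, b, c)`
is positively ordered, negatively ordered or degenerate. Then `o` is an alternating cocycle, and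
`(o a b d - o a b c) / 2` is an anti-symmetric cross ratio with the prescribed values: the exchange
of the two pairs and the additivity in the first pair both follow from the cocycle identity.

Conversely, up to exchanging `a` with `b` and `c` with `d`, a quadruple of distinct points is
ordered either as `(a, b, c, d)` or as `(a, c, b, d)`, so the symmetries and the prescribed values
leave no freedom.
-/

namespace PD4

variable {X : Type*} {a b c d : X}

lemma swap_left_s7 (h : PD4 a b c d) : PD4 b a c d :=
  let ⟨hab, hac, had, hbc, hbd, hcd⟩ := h
  ⟨hab.symm, hbc, hbd, hac, had, hcd⟩

lemma swap_pairs_s7 (h : PD4 a b c d) : PD4 c d a b :=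
  let ⟨hab, hac, had, hbc, hbd, hcd⟩ := h
  ⟨hcd, hac.symm, hbc.symm, had.symm, hbd.symm, hab⟩

end PD4

section CircularPreorder

variable {X : Type*} [CircularPreorder X] {a b c d : X}

lemma ne_left_of_sbtw (h : sbtw a b c) : a ≠ b := by
  rintro rfl
  exact sbtw_irrefl_left h

lemma ne_left_right_of_sbtw (h : sbtw a b c) : a ≠ c := by
  rintro rfl
  exact sbtw_irrefl_left_right h

/-- The points `a`, `b`, `c`, `d` are pairwise distinct and met in this cyclic order: the notion of
ordered quadruple for which the cross ratio is normalized. -/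
def CyclicallyOrdered (a b c d : X) : Prop := sbtw a b c ∧ sbtw a c d

namespace CyclicallyOrdered

lemma rotate (h : CyclicallyOrdered a b c d) : CyclicallyOrdered b c d a :=
  ⟨(h.2.cyclic_left.trans_right h.1.cyclic_right).cyclic_right, (h.1.trans_right h.2).cyclic_left⟩

lemma sbtw_left (h : CyclicallyOrdered a b c d) : sbtw a b d := h.rotate.2.cyclic_right

lemma sbtw_right (h : CyclicallyOrdered a b c d) : sbtw b c d := h.rotate.1

end CyclicallyOrdered

open Classical in
/-- The orientation cocycle of a circular order: `1` on positively ordered triples, `-1` on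
negatively ordered triples and `0` on degenerate ones. It is real-valued because the cross ratio
is built from it by halving. -/
noncomputable def orientation (a b c : X) : ℝ :=
  (if sbtw a b c then 1 else 0) - (if sbtw c b a then 1 else 0)

lemma orientation_of_sbtw (h : sbtw a b c) : orientation a b c = 1 := by
  simp [orientation, h, h.not_sbtw]

lemma abs_orientation_le_one (a b c : X) : |orientation a b c| ≤ 1 := by
  unfold orientation
  split_ifs <;> norm_num

lemma orientation_rotate (a b c : X) : orientation b c a = orientation a b c := by
  rw [orientation, orientation, sbtw_cyclic (a := b) (b := c) (c := a),
    ← sbtw_cyclic (a := c) (b := b) (c := a)]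

lemma orientation_swap_right (a b c : X) : orientation a c b = -orientation a b c := by
  rw [← orientation_rotate a c b]
  exact (neg_sub _ _).symm

lemma orientation_swap_left (a b c : X) : orientation b a c = -orientation a b c := by
  rw [← orientation_rotate b a c, orientation_swap_right]

lemma orientation_self_left (a b : X) : orientation a a b = 0 :=
  self_eq_neg.mp (orientation_swap_left a a b)

/-- The anti-symmetric cross ratio of a circular order, `(o a b d - o a b c) / 2` for the
orientation cocycle `o`. -/
noncomputable def orientationCrossRatio (a b c d : X) : ℝ :=
  (orientation a b d - orientation a b c) / 2

lemma abs_orientationCrossRatio_le_one (a b c d : X) : |orientationCrossRatio a b c d| ≤ 1 := by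
  have hd := abs_le.mp (abs_orientation_le_one a b d)
  have hc := abs_le.mp (abs_orientation_le_one a b c)
  rw [orientationCrossRatio, abs_le]
  constructor <;> linarith

lemma orientationCrossRatio_swap_left (a b c d : X) :
    orientationCrossRatio a b c d = -orientationCrossRatio b a c d := by
  rw [orientationCrossRatio, orientationCrossRatio, orientation_swap_left b a d,
    orientation_swap_left b a c]
  ring

lemma orientationCrossRatio_self_left (a b c : X) : orientationCrossRatio a a b c = 0 := by
  rw [orientationCrossRatio, orientation_self_left, orientation_self_left, sub_self, zero_div]

lemma orientationCrossRatio_self_right (a b c : X) : orientationCrossRatio b c a a = 0 := by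
  rw [orientationCrossRatio, sub_self, zero_div]

lemma orientationCrossRatio_eq_zero (h : CyclicallyOrdered a b c d) :
    orientationCrossRatio a b c d = 0 := by
  rw [orientationCrossRatio, orientation_of_sbtw h.sbtw_left, orientation_of_sbtw h.1, sub_self,
    zero_div]

lemma orientationCrossRatio_eq_one (h : CyclicallyOrdered a c b d) :
    orientationCrossRatio a b c d = 1 := by
  rw [orientationCrossRatio, orientation_of_sbtw h.2, orientation_swap_right,
    orientation_of_sbtw h.1]
  norm_num

end CircularPreorder

section CircularOrder

variable {X : Type*} [CircularOrder X] {a b c d : X}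

lemma sbtw_or_sbtw_of_ne (hab : a ≠ b) (hac : a ≠ c) (hbc : b ≠ c) :
    sbtw a b c ∨ sbtw c b a := by
  simp only [sbtw_iff_not_btw, ← not_and_or]
  rintro ⟨hcba, habc⟩
  rcases btw_antisymm habc hcba with h | h | h
  exacts [hab h, hbc h, hac h.symm]

lemma PD4.sbtw_or_sbtw (h : PD4 a b c d) : sbtw a b c ∨ sbtw c b a :=
  have ⟨hab, hac, _, hbc, _, _⟩ := h
  sbtw_or_sbtw_of_ne hab hac hbc

-- The three alternatives say on which of the arcs `(c, a)`, `(b, c)`, `(a, b)` the point `d` lies.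
lemma cyclicallyOrdered_cases_of_sbtw (h : sbtw a b c) (had : a ≠ d) (hbd : b ≠ d) (hcd : c ≠ d) :
    CyclicallyOrdered a b c d ∨ CyclicallyOrdered a b d c ∨ CyclicallyOrdered a d b c := by
  rcases sbtw_or_sbtw_of_ne (ne_left_right_of_sbtw h) had hcd with hacd | hdca
  · exact .inl ⟨h, hacd⟩
  rcases sbtw_or_sbtw_of_ne (ne_left_of_sbtw h) had hbd with habd | hdba
  · exact .inr (.inl ⟨habd, hdca.cyclic_right⟩)
  · exact .inr (.inr ⟨hdba.cyclic_right, h⟩)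

lemma orientation_cocycle_of_distinct (h : PD4 a b c d) :
    orientation b c d - orientation a c d + orientation a b d - orientation a b c = 0 := by
  wlog habc : sbtw a b c generalizing a b
  · have hbac : sbtw b a c := (h.sbtw_or_sbtw.resolve_left habc).cyclic_left
    linarith [this h.swap_left_s7 hbac, orientation_swap_left a b c, orientation_swap_left a b d]
  have ⟨_, _, had, _, hbd, hcd⟩ := h
  rcases cyclicallyOrdered_cases_of_sbtw habc had hbd hcd with h | h | h
  · rw [orientation_of_sbtw h.sbtw_right, orientation_of_sbtw h.2,
      orientation_of_sbtw h.sbtw_left, orientation_of_sbtw h.1]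
    norm_num
  · rw [orientation_swap_right b d c, orientation_swap_right a d c,
      orientation_of_sbtw h.sbtw_right, orientation_of_sbtw h.2,
      orientation_of_sbtw h.1, orientation_of_sbtw h.sbtw_left]
    norm_num
  · rw [orientation_rotate d b c, orientation_swap_right a d c, orientation_swap_right a d b,
      orientation_of_sbtw h.sbtw_right, orientation_of_sbtw h.sbtw_left,
      orientation_of_sbtw h.1, orientation_of_sbtw h.2]
    norm_num

theorem orientation_cocycle (a b c d : X) :
    orientation b c d - orientation a c d + orientation a b d - orientation a b c = 0 := by
  by_cases h : PD4 a b c d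
  · exact orientation_cocycle_of_distinct h
  simp only [PD4, not_and_or, not_not] at h
  rcases h with rfl | rfl | rfl | rfl | rfl | rfl <;>
    grind [orientation_swap_left, orientation_swap_right, orientation_self_left]

lemma orientationCrossRatio_swap_pairs (a b c d : X) :
    orientationCrossRatio c d a b = -orientationCrossRatio a b c d := by
  rw [orientationCrossRatio, orientationCrossRatio, orientation_rotate b c d,
    orientation_rotate a c d]
  linarith [orientation_cocycle a b c d]

lemma orientationCrossRatio_add (a b b' c d : X) :
    orientationCrossRatio a b c d + orientationCrossRatio b b' c d =
      orientationCrossRatio a b' c d := by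
  simp only [orientationCrossRatio]
  linarith [orientation_cocycle a b b' c, orientation_cocycle a b b' d]

theorem isCrossRatio_orientationCrossRatio :
    IsCrossRatio (orientationCrossRatio : X → X → X → X → ℝ) :=
  ⟨⟨1, fun a b c d _ ↦ abs_orientationCrossRatio_le_one a b c d⟩,
    fun a b c d _ ↦ orientationCrossRatio_swap_left a b c d,
    fun a b c d _ ↦ orientationCrossRatio_swap_pairs a b c d,
    fun a b b' c d _ ↦ orientationCrossRatio_add a b b' c d,
    fun a b c _ ↦ orientationCrossRatio_self_left a b c,
    fun a b c _ ↦ orientationCrossRatio_self_right a b c⟩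

theorem eq_zero_of_antisymm_of_cyclicallyOrdered {A : Type*} [SubtractionMonoid A]
    {S : X → X → X → X → A} (hswap : ∀ a b c d, PD4 a b c d → S a b c d = -S b a c d)
    (hexch : ∀ a b c d, PD4 a b c d → S c d a b = -S a b c d)
    (hunlinked : ∀ a b c d, CyclicallyOrdered a b c d → S a b c d = 0)
    (hlinked : ∀ a b c d, CyclicallyOrdered a c b d → S a b c d = 0)
    (h : PD4 a b c d) : S a b c d = 0 := by
  wlog habc : sbtw a b c generalizing a b
  · have hbac : sbtw b a c := (h.sbtw_or_sbtw.resolve_left habc).cyclic_left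
    rw [hswap a b c d h, this h.swap_left_s7 hbac, neg_zero]
  have hswap_right : S a b d c = 0 → S a b c d = 0 := fun habdc ↦ by
    rw [← neg_eq_zero, ← hexch a b c d h, hswap c d a b h.swap_pairs_s7,
      hexch a b d c h.swap_pairs_s7.swap_left_s7.swap_pairs_s7, habdc, neg_zero, neg_zero]
  have ⟨_, _, had, _, hbd, hcd⟩ := h
  rcases cyclicallyOrdered_cases_of_sbtw habc had hbd hcd with habcd | habdc | hadbc
  · exact hunlinked a b c d habcd
  · exact hswap_right (hunlinked a b d c habdc)
  · exact hswap_right (hlinked a b d c hadbc)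

theorem stmt7_general :
    (∃ R₀ : X → X → X → X → ℝ, IsCrossRatio R₀ ∧
      (∀ a b c d, CyclicallyOrdered a b c d → R₀ a b c d = 0) ∧
      (∀ a b c d, CyclicallyOrdered a c b d → R₀ a b c d = 1)) ∧
    (∀ R R' : X → X → X → X → ℝ,
      (∀ a b c d, PD4 a b c d → R a b c d = -R b a c d) →
      (∀ a b c d, PD4 a b c d → R c d a b = -R a b c d) →
      (∀ a b c d, CyclicallyOrdered a b c d → R a b c d = 0) →
      (∀ a b c d, CyclicallyOrdered a c b d → R a b c d = 1) →
      (∀ a b c d, PD4 a b c d → R' a b c d = -R' b a c d) →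
      (∀ a b c d, PD4 a b c d → R' c d a b = -R' a b c d) →
      (∀ a b c d, CyclicallyOrdered a b c d → R' a b c d = 0) →
      (∀ a b c d, CyclicallyOrdered a c b d → R' a b c d = 1) →
      ∀ a b c d, PD4 a b c d → R a b c d = R' a b c d) := by
  refine ⟨⟨orientationCrossRatio, isCrossRatio_orientationCrossRatio,
    fun _ _ _ _ ↦ orientationCrossRatio_eq_zero, fun _ _ _ _ ↦ orientationCrossRatio_eq_one⟩, ?_⟩
  intro R R' hswap hexch h0 h1 hswap' hexch' h0' h1' a b c d h
  refine sub_eq_zero.mp (eq_zero_of_antisymm_of_cyclicallyOrdered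
    (S := fun a b c d ↦ R a b c d - R' a b c d) ?_ ?_ ?_ ?_ h)
  · intro a b c d h
    rw [hswap a b c d h, hswap' a b c d h, neg_sub_neg, neg_sub]
  · intro a b c d h
    rw [hexch a b c d h, hexch' a b c d h, neg_sub_neg, neg_sub]
  · intro a b c d h
    rw [h0 a b c d h, h0' a b c d h, sub_self]
  · intro a b c d h
    rw [h1 a b c d h, h1' a b c d h, sub_self]

end CircularOrder

section AddCircle

open Set

variable {𝕜 : Type*} [AddCommGroup 𝕜] [LinearOrder 𝕜] [IsOrderedAddMonoid 𝕜] [Archimedean 𝕜]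
  {p : 𝕜} [hp : Fact (0 < p)] {s x y : 𝕜}

lemma sbtw_coe_iff_lt (hx : x ∈ Ioo s (s + p)) (hy : y ∈ Ioo s (s + p)) :
    sbtw (s : AddCircle p) x y ↔ x < y := by
  rw [sbtw_iff_not_btw, btw_cyclic, QuotientAddGroup.btw_coe_iff,
    (toIcoMod_eq_self hp.out).2 (Ioo_subset_Ico_self hy),
    (toIocMod_eq_self hp.out).2 (Ioo_subset_Ioc_self hx), not_le]

lemma exists_mem_Ioo_coe_eq {z : AddCircle p} (h : (s : AddCircle p) ≠ z) :
    ∃ t ∈ Ioo s (s + p), (t : AddCircle p) = z := by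
  obtain ⟨⟨t, ht⟩, rfl⟩ := (AddCircle.equivIco p s).symm.surjective z
  refine ⟨t, ⟨ht.1.lt_of_ne ?_, ht.2⟩, rfl⟩
  rintro rfl
  exact h rfl

end AddCircle

lemma ordered4_iff_cyclicallyOrdered {a b c d : Circle1} :
    Ordered4 a b c d ↔ CyclicallyOrdered a b c d := by
  constructor
  · rintro ⟨s, t, u, v, hst, htu, huv, hvs, rfl, rfl, rfl, rfl⟩
    have ht : t ∈ Set.Ioo s (s + 1) := ⟨hst, by linarith⟩
    have hu : u ∈ Set.Ioo s (s + 1) := ⟨by linarith, by linarith⟩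
    have hv : v ∈ Set.Ioo s (s + 1) := ⟨by linarith, hvs⟩
    exact ⟨(sbtw_coe_iff_lt ht hu).2 htu, (sbtw_coe_iff_lt hu hv).2 huv⟩
  · rintro ⟨habc, hacd⟩
    obtain ⟨s, rfl⟩ := QuotientAddGroup.mk_surjective a
    obtain ⟨t, ht, rfl⟩ := exists_mem_Ioo_coe_eq (ne_left_of_sbtw habc)
    obtain ⟨u, hu, rfl⟩ := exists_mem_Ioo_coe_eq (ne_left_of_sbtw hacd)
    obtain ⟨v, hv, rfl⟩ := exists_mem_Ioo_coe_eq (ne_left_right_of_sbtw hacd)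
    exact ⟨s, t, u, v, ht.1, (sbtw_coe_iff_lt ht hu).1 habc, (sbtw_coe_iff_lt hu hv).1 hacd,
      hv.2, rfl, rfl, rfl, rfl⟩

/-- there is exactly one anti-symmetric cross ratio `R₀` on the circle
`ℝ/ℤ` (as a function on pairwise distinct quadruples) with `R₀ a b c d = 0` whenever
`(a,b,c,d)` is ordered and `R₀ a b c d = 1` whenever `(a,c,b,d)` is ordered. -/
theorem stmt7 :
    (∃ R₀ : Circle1 → Circle1 → Circle1 → Circle1 → ℝ, IsCrossRatio R₀ ∧
      (∀ a b c d, Ordered4 a b c d → R₀ a b c d = 0) ∧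
      (∀ a b c d, Ordered4 a c b d → R₀ a b c d = 1)) ∧
    (∀ R R' : Circle1 → Circle1 → Circle1 → Circle1 → ℝ,
      IsCrossRatio R → (∀ a b c d, Ordered4 a b c d → R a b c d = 0) →
      (∀ a b c d, Ordered4 a c b d → R a b c d = 1) →
      IsCrossRatio R' → (∀ a b c d, Ordered4 a b c d → R' a b c d = 0) →
      (∀ a b c d, Ordered4 a c b d → R' a b c d = 1) →
      ∀ a b c d, PD4 a b c d → R a b c d = R' a b c d) := by
  obtain ⟨existence, uniqueness⟩ := stmt7_general (X := Circle1)
  simp only [ordered4_iff_cyclicallyOrdered]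
  exact ⟨existence, fun R R' hR h0 h1 hR' h0' h1' ↦
    uniqueness R R' hR.2.1 hR.2.2.1 h0 h1 hR'.2.1 hR'.2.2.1 h0' h1'⟩
end
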